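/- arXiv:1304.2436 — 5 statements merged into one kernel-verified Lean document; each statement's English description precedes it below -/
import Mathlib

section
/- Every element P of GL(2,ℤ) of finite order with P ≠ I and P ≠ -I is conjugate in GL(2,ℤ) to one of the five matrices M₁ = [[1,0],[0,-1]], M₂ = [[0,1],[1,0]], M₃ = [[0,1],[-1,-1]], M₄ = [[0,1],[-1,0]], M₅ = [[0,1],[-1,1]]. -/
open Matrix

/-!
If `det M = 1`, then `M ^ n` is a combination of `M` and `1` whose coefficients are values of
Chebyshev polynomials at the trace; for `2 ≤ |tr M|` the coefficient of `M` does not vanish, so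
`M ^ n = 1` forces `M = ±1`. Applied to `P` or to `P ^ 2`, this leaves `det P = 1`, `|tr P| ≤ 1` or
`det P = -1`, `tr P = 0`, so the discriminant is `-4`, `-3` or `4`.

As in Gauss' reduction of binary quadratic forms, the smallest possible lower left entry `c` in the
conjugacy class satisfies `3 * c ^ 2 ≤ |discr|`, so here it is `0` or a unit. If it is a unit, the
matrix is conjugate to the companion matrix of its characteristic polynomial. If it is `0`, the
discriminant is a square, hence `4`, and a triangular matrix `!![a, b; 0, -a]` with `a = ±1` is
determined up to conjugacy by the parity of `b`.
-/

section PowersAndTrace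

open Polynomial

theorem abs_eval_chebyshevS_sub_one_lt {R : Type*} [CommRing R] [LinearOrder R]
    [IsStrictOrderedRing R] {t : R} (ht : 2 ≤ |t|) (n : ℕ) :
    |(Chebyshev.S R (n - 1)).eval t| < |(Chebyshev.S R n).eval t| := by
  induction n with
  | zero => simp
  | succ n ih =>
    have hrec : (Chebyshev.S R (n + 1)).eval t =
        t * (Chebyshev.S R n).eval t - (Chebyshev.S R (n - 1)).eval t := by
      simp [Chebyshev.S_add_one]
    have htri := abs_sub_abs_le_abs_sub (t * (Chebyshev.S R n).eval t)
      ((Chebyshev.S R (n - 1)).eval t)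
    rw [← hrec, abs_mul] at htri
    push_cast
    rw [add_sub_cancel_right]
    nlinarith [abs_nonneg ((Chebyshev.S R n).eval t)]

theorem pow_eq_eval_chebyshevS_smul_sub {R A : Type*} [CommRing R] [Ring A] [Algebra R A]
    {t : R} {x : A} (hx : x ^ 2 = t • x - 1) (n : ℕ) :
    x ^ n = (Chebyshev.S R (n - 1)).eval t • x - (Chebyshev.S R (n - 2)).eval t • (1 : A) := by
  induction n with
  | zero => simp
  | succ n ih =>
    have hrec : (Chebyshev.S R n).eval t =
        t * (Chebyshev.S R (n - 1)).eval t - (Chebyshev.S R (n - 2)).eval t := by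
      rw [Chebyshev.S_eq R n]
      simp
    have hidx : ((n + 1 : ℕ) : ℤ) - 2 = n - 1 := by push_cast; ring
    rw [hidx, Nat.cast_succ, add_sub_cancel_right, hrec, pow_succ, ih, sub_mul, smul_mul_assoc,
      smul_mul_assoc, one_mul, ← sq, hx]
    module

variable {R : Type*} [CommRing R]

theorem sq_eq_trace_smul_sub_det_smul_one (M : Matrix (Fin 2) (Fin 2) R) :
    M ^ 2 = M.trace • M - M.det • (1 : Matrix (Fin 2) (Fin 2) R) := by
  ext i j
  fin_cases i <;> fin_cases j <;>
    simp [sq, mul_apply, trace_fin_two, det_fin_two] <;> ring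

theorem trace_sq_eq_sub_two_mul_det (M : Matrix (Fin 2) (Fin 2) R) :
    (M ^ 2).trace = M.trace ^ 2 - 2 * M.det := by
  rw [sq_eq_trace_smul_sub_det_smul_one]
  simp [sq, mul_comm]

theorem eq_one_or_eq_neg_one_of_smul_eq_smul_one [NoZeroDivisors R] {M : Matrix (Fin 2) (Fin 2) R}
    {u v : R} (hu : u ≠ 0) (h : u • M = v • (1 : Matrix (Fin 2) (Fin 2) R)) (hdet : M.det = 1) :
    M = 1 ∨ M = -1 := by
  have h01 : M 0 1 = 0 := by simpa [hu] using congr_fun₂ h 0 1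
  have h10 : M 1 0 = 0 := by simpa [hu] using congr_fun₂ h 1 0
  have h00 : u * M 0 0 = v := by simpa using congr_fun₂ h 0 0
  have h11 : u * M 1 1 = v := by simpa using congr_fun₂ h 1 1
  have hdiag : M 1 1 = M 0 0 := mul_left_cancel₀ hu (h11.trans h00.symm)
  have hsq : M 0 0 * M 0 0 = 1 := by simpa [det_fin_two, h01, hdiag] using hdet
  rw [eta_fin_two M, h01, h10, hdiag]
  exact (mul_self_eq_one_iff.mp hsq).imp (fun h => by simp [h, one_fin_two])
    (fun h => by simp [h, one_fin_two])

variable [LinearOrder R] [IsStrictOrderedRing R] {M : Matrix (Fin 2) (Fin 2) R} {n : ℕ}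

theorem eq_one_or_eq_neg_one_of_two_le_abs_trace (hdet : M.det = 1) (htr : 2 ≤ |M.trace|)
    (hn : n ≠ 0) (hM : M ^ n = 1) : M = 1 ∨ M = -1 := by
  obtain ⟨m, rfl⟩ := Nat.exists_eq_succ_of_ne_zero hn
  have hcoeff : (Chebyshev.S R m).eval M.trace ≠ 0 :=
    abs_pos.mp ((abs_nonneg _).trans_lt (abs_eval_chebyshevS_sub_one_lt htr m))
  have hsq : M ^ 2 = M.trace • M - 1 := by
    rw [sq_eq_trace_smul_sub_det_smul_one, hdet, one_smul]
  have hpow := pow_eq_eval_chebyshevS_smul_sub hsq (m + 1)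
  rw [hM, Nat.cast_succ, add_sub_cancel_right] at hpow
  have hscalar : (Chebyshev.S R m).eval M.trace • M =
      (1 + (Chebyshev.S R (m + 1 - 2)).eval M.trace) • (1 : Matrix (Fin 2) (Fin 2) R) := by
    rw [add_smul, one_smul, ← eq_sub_iff_add_eq.mp hpow]
  exact eq_one_or_eq_neg_one_of_smul_eq_smul_one hcoeff hscalar hdet

theorem trace_eq_zero_of_det_eq_neg_one (hdet : M.det = -1) (hn : n ≠ 0) (hM : M ^ n = 1) :
    M.trace = 0 := by
  have htr : (M ^ 2).trace = M.trace ^ 2 + 2 := by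
    rw [trace_sq_eq_sub_two_mul_det, hdet]
    ring
  have hdet_sq : (M ^ 2).det = 1 := by rw [det_pow, hdet, neg_one_sq]
  have htr_sq : 2 ≤ |(M ^ 2).trace| := by
    rw [htr]
    exact le_abs.mpr (.inl (by linarith [sq_nonneg M.trace]))
  have hpow : (M ^ 2) ^ n = 1 := by rw [pow_right_comm, hM, one_pow]
  have htrace_le : (M ^ 2).trace ≤ 2 := by
    obtain h | h := eq_one_or_eq_neg_one_of_two_le_abs_trace hdet_sq htr_sq hn hpow <;> norm_num [h]
  exact pow_eq_zero_iff two_ne_zero |>.mp (by linarith [sq_nonneg M.trace])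

end PowersAndTrace

section Conjugation

theorem exists_units_conj_eq_of_isConj {α : Type*} [Monoid α] {u : αˣ} {a : α}
    (h : IsConj (u : α) a) : ∃ c : αˣ, ((c * u * c⁻¹ : αˣ) : α) = a := by
  obtain ⟨c, hc⟩ := h
  refine ⟨c, ?_⟩
  rw [Units.val_mul, Units.val_mul, (Units.mul_inv_eq_iff_eq_mul c).mpr hc.eq]

variable {R : Type*} [CommRing R]

section AnySize

variable {n : Type*} [Fintype n] [DecidableEq n] {M N : Matrix n n R}

theorem isConj_of_mul_eq_mul {U : Matrix n n R} (hU : IsUnit U.det) (h : U * M = N * U) :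
    IsConj M N :=
  ⟨((isUnit_iff_isUnit_det U).mpr hU).unit, h⟩

theorem det_eq_of_isConj (h : IsConj M N) : M.det = N.det :=
  isConj_iff_eq.mp (detMonoidHom.map_isConj h)

theorem trace_eq_of_isConj (h : IsConj M N) : M.trace = N.trace := by
  obtain ⟨U, hU⟩ := h
  rw [(Units.eq_mul_inv_iff_mul_eq U).mpr hU.eq.symm, trace_mul_comm, Units.inv_mul_cancel_left]

end AnySize

theorem isConj_shear (a b c d k : R) :
    IsConj !![a, b; c, d] !![a + k * c, b + k * (d - a) - k ^ 2 * c; c, d - k * c] := by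
  refine isConj_of_mul_eq_mul (U := !![1, k; 0, 1]) (by simp) ?_
  ext i j
  fin_cases i <;> fin_cases j <;> simp <;> ring

theorem isConj_swap (a b c d : R) : IsConj !![a, b; c, d] !![d, c; b, a] :=
  isConj_of_mul_eq_mul (U := !![0, 1; 1, 0]) (by simp) (by simp)

-- The second standard row vector `e` is cyclic: the rows of the conjugator are `e` and `e * M`.
theorem isConj_companion_of_isUnit {M : Matrix (Fin 2) (Fin 2) R} (h : IsUnit (M 1 0)) :
    IsConj M !![0, 1; -M.det, M.trace] := by
  refine isConj_of_mul_eq_mul (U := !![0, 1; M 1 0, M 1 1]) (by simpa using h) ?_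
  ext i j
  fin_cases i <;> fin_cases j <;> simp [mul_apply, det_fin_two, trace_fin_two] <;> ring

end Conjugation

section Reduction

theorem exists_abs_add_two_mul_le (x : ℤ) {c : ℤ} (hc : c ≠ 0) :
    ∃ k : ℤ, |x + 2 * (k * c)| ≤ |c| := by
  have hpos : 0 < 2 * c.natAbs := by lia
  have hdvd : 2 * c ∣ x.bmod (2 * c.natAbs) - x := by
    have h := Int.dvd_bmod_sub_self (x := x) (m := 2 * c.natAbs)
    push_cast at h
    rwa [← abs_two, ← abs_mul, abs_dvd] at h
  obtain ⟨k, hk⟩ := hdvd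
  refine ⟨k, ?_⟩
  have hle := Int.le_bmod (x := x) hpos
  have hlt := Int.bmod_lt (x := x) hpos
  rw [show x + 2 * (k * c) = x.bmod (2 * c.natAbs) by linarith, Int.abs_eq_natAbs c, abs_le]
  omega

theorem exists_isConj_abs_lowerLeft_minimal (M : Matrix (Fin 2) (Fin 2) ℤ) :
    ∃ N, IsConj M N ∧ ∀ N', IsConj N N' → |N 1 0| ≤ |N' 1 0| := by
  obtain ⟨N, hMN, hmin⟩ := exists_minimalFor_of_wellFoundedLT (IsConj M)
    (fun N => (N 1 0).natAbs) ⟨M, IsConj.refl M⟩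
  refine ⟨N, hMN, fun N' hN' => ?_⟩
  rw [Int.abs_eq_natAbs, Int.abs_eq_natAbs, Nat.cast_le]
  exact (le_total _ _).elim id (hmin (hMN.trans hN'))

theorem three_mul_sq_le_abs_discr {R : Type*} [CommRing R] [LinearOrder R] [IsStrictOrderedRing R]
    {a b c d : R} (had : |a - d| ≤ |c|) (hcb : |c| ≤ |b|) :
    3 * c ^ 2 ≤ |!![a, b; c, d].discr| := by
  have hdiscr : !![a, b; c, d].discr = (a - d) ^ 2 + 4 * (b * c) := by
    rw [discr_fin_two, trace_fin_two_of, det_fin_two_of]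
    ring
  have hdiag : (a - d) ^ 2 ≤ c ^ 2 := sq_le_sq.mpr had
  have hoff : c ^ 2 ≤ |b * c| := by
    rw [← sq_abs, sq, abs_mul]
    gcongr
  calc 3 * c ^ 2 ≤ 4 * |b * c| - (a - d) ^ 2 := by linarith
    _ = |4 * (b * c)| - |(a - d) ^ 2| := by rw [abs_mul 4, abs_sq, Nat.abs_ofNat]
    _ ≤ |4 * (b * c) + (a - d) ^ 2| := abs_sub_abs_le_abs_add _ _
    _ = _ := by rw [hdiscr, add_comm]

theorem exists_isConj_three_mul_sq_lowerLeft_le (M : Matrix (Fin 2) (Fin 2) ℤ) :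
    ∃ N, IsConj M N ∧ 3 * N 1 0 ^ 2 ≤ |M.discr| := by
  obtain ⟨N, hMN, hmin⟩ := exists_isConj_abs_lowerLeft_minimal M
  refine ⟨N, hMN, ?_⟩
  by_cases hc : N 1 0 = 0
  · simp [hc]
  obtain ⟨k, hk⟩ := exists_abs_add_two_mul_le (N 0 0 - N 1 1) hc
  have hshear := isConj_shear (N 0 0) (N 0 1) (N 1 0) (N 1 1) k
  rw [← eta_fin_two] at hshear
  have hswap := hshear.trans (isConj_swap ..)
  have hMshear := hMN.trans hshear
  rw [discr_fin_two, trace_eq_of_isConj hMshear, det_eq_of_isConj hMshear, ← discr_fin_two]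
  refine three_mul_sq_le_abs_discr ?_ (hmin _ hswap)
  rwa [show N 0 0 + k * N 1 0 - (N 1 1 - k * N 1 0) = N 0 0 - N 1 1 + 2 * (k * N 1 0) by ring]

theorem isConj_companion_or_upperTriangular_of_abs_discr_lt {M : Matrix (Fin 2) (Fin 2) ℤ}
    (h : |M.discr| < 12) :
    IsConj M !![0, 1; -M.det, M.trace] ∨ ∃ a b d, IsConj M !![a, b; 0, d] := by
  obtain ⟨N, hMN, hN⟩ := exists_isConj_three_mul_sq_lowerLeft_le M
  have hlt : |N 1 0| < 2 := abs_lt_of_sq_lt_sq (by linarith) two_pos.le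
  obtain hc | hc := Int.abs_le_one_iff.mp (Int.lt_add_one_iff.mp hlt)
  · right
    exact ⟨N 0 0, N 0 1, N 1 1, by rwa [← hc, ← eta_fin_two]⟩
  · left
    rw [det_eq_of_isConj hMN, trace_eq_of_isConj hMN]
    exact hMN.trans (isConj_companion_of_isUnit (Int.isUnit_iff.mpr hc))

theorem isConj_companion_of_discr_neg {M : Matrix (Fin 2) (Fin 2) ℤ} (hneg : M.discr < 0)
    (h : -12 < M.discr) : IsConj M !![0, 1; -M.det, M.trace] := by
  refine (isConj_companion_or_upperTriangular_of_abs_discr_lt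
    (abs_lt.mpr ⟨h, hneg.trans (by norm_num)⟩)).resolve_right ?_
  rintro ⟨a, b, d, htri⟩
  have hsq : M.discr = (a - d) ^ 2 := by
    rw [discr_fin_two, trace_eq_of_isConj htri, det_eq_of_isConj htri, trace_fin_two_of,
      det_fin_two_of]
    ring
  exact (sq_nonneg (a - d)).not_gt (hsq ▸ hneg)

theorem isConj_companion_of_abs_trace_lt_two {M : Matrix (Fin 2) (Fin 2) ℤ} (hdet : M.det = 1)
    (htr : |M.trace| < 2) : IsConj M !![0, 1; -1, M.trace] := by
  have hdiscr : M.discr = M.trace ^ 2 - 4 := by rw [discr_fin_two, hdet, mul_one]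
  have hsq : M.trace ^ 2 < 2 ^ 2 := sq_lt_sq' (abs_lt.mp htr).1 (abs_lt.mp htr).2
  have hneg : M.discr < 0 := by linarith
  have hlow : -12 < M.discr := by linarith [sq_nonneg M.trace]
  simpa only [hdet] using isConj_companion_of_discr_neg hneg hlow

theorem isConj_diagonal_or_companion_of_upperTriangular {a : ℤ} (ha : IsUnit a) (b : ℤ) :
    IsConj !![a, b; 0, -a] !![1, 0; 0, -1] ∨ IsConj !![a, b; 0, -a] !![0, 1; 1, 0] := by
  have hsq : a * a = 1 := Int.isUnit_mul_self ha
  have hshear : IsConj !![a, b; 0, -a] !![a, b % 2; 0, -a] := by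
    convert isConj_shear a b 0 (-a) (a * (b / 2)) using 5
    · simp
    · linear_combination 2 * (b / 2) * hsq + Int.emod_add_mul_ediv b 2
    · simp
  obtain h | h := Int.emod_two_eq_zero_or_one b <;> rw [h] at hshear
  · left
    obtain rfl | rfl := Int.isUnit_iff.mp ha
    · exact hshear
    · exact hshear.trans (isConj_swap ..)
  · right
    have hcomp := isConj_companion_of_isUnit (M := !![-a, 0; 1, a]) isUnit_one
    rw [det_fin_two_of, trace_fin_two_of, neg_mul, hsq] at hcomp
    have hswap := hshear.trans (isConj_swap ..)
    simpa using hswap.trans hcomp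

theorem isConj_diagonal_or_companion_of_det_eq_neg_one {M : Matrix (Fin 2) (Fin 2) ℤ}
    (hdet : M.det = -1) (htr : M.trace = 0) :
    IsConj M !![1, 0; 0, -1] ∨ IsConj M !![0, 1; 1, 0] := by
  have hdiscr : |M.discr| < 12 := by norm_num [discr_fin_two, hdet, htr]
  obtain hcomp | ⟨a, b, d, htri⟩ := isConj_companion_or_upperTriangular_of_abs_discr_lt hdiscr
  · right
    simpa [hdet, htr] using hcomp
  · have htr_tri := htr.symm.trans (trace_eq_of_isConj htri)
    have hdet_tri := hdet.symm.trans (det_eq_of_isConj htri)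
    rw [trace_fin_two_of] at htr_tri
    rw [det_fin_two_of] at hdet_tri
    obtain rfl : d = -a := by linarith
    have ha : IsUnit a := .of_mul_eq_one a (by linarith)
    exact (isConj_diagonal_or_companion_of_upperTriangular ha b).imp htri.trans htri.trans

end Reduction

/-- Every element of `GL(2,ℤ)` of finite order other than `±I` is conjugate in
`GL(2,ℤ)` to one of five standard matrices, of orders 2, 2, 3, 4 and 6. -/
theorem finite_order_GL2Z_conjugate_to_standard
    (P : GL (Fin 2) ℤ) (hfin : IsOfFinOrder P) (h1 : P ≠ 1) (h2 : P ≠ -1) :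
    ∃ Q : GL (Fin 2) ℤ,
      ((Q * P * Q⁻¹ : GL (Fin 2) ℤ) : Matrix (Fin 2) (Fin 2) ℤ) ∈
        ({!![1, 0; 0, -1], !![0, 1; 1, 0], !![0, 1; -1, -1],
          !![0, 1; -1, 0], !![0, 1; -1, 1]} : Set (Matrix (Fin 2) (Fin 2) ℤ)) := by
  obtain ⟨n, hn, hPn⟩ := isOfFinOrder_iff_pow_eq_one.mp hfin
  have hpow : (P : Matrix (Fin 2) (Fin 2) ℤ) ^ n = 1 := by
    rw [← Units.val_pow_eq_pow_val, hPn, Units.val_one]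
  obtain hdet | hdet := Int.isUnit_iff.mp ((isUnit_iff_isUnit_det _).mp P.isUnit)
  · have htr : |P.val.trace| < 2 := by
      by_contra! htr
      exact (eq_one_or_eq_neg_one_of_two_le_abs_trace hdet htr hn.ne' hpow).elim
        (fun h => h1 (Units.ext h)) (fun h => h2 (Units.ext h))
    obtain ⟨Q, hQ⟩ := exists_units_conj_eq_of_isConj (isConj_companion_of_abs_trace_lt_two hdet htr)
    refine ⟨Q, ?_⟩
    rw [hQ]
    obtain ⟨hlo, hhi⟩ := abs_lt.mp htr
    interval_cases P.val.trace <;> simp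
  · have htr : P.val.trace = 0 := trace_eq_zero_of_det_eq_neg_one hdet hn.ne' hpow
    obtain h | h := isConj_diagonal_or_companion_of_det_eq_neg_one hdet htr <;>
    · obtain ⟨Q, hQ⟩ := exists_units_conj_eq_of_isConj h
      exact ⟨Q, by rw [hQ]; simp⟩
end

section
/- For each of the five matrices P ∈ {M₁, M₂, M₃, M₄, M₅}, the centralizer of P in GL(2,ℤ) is a finite group. -/
open Matrix

/-!
For commuting `2 × 2` matrices `A` and `B`, the traceless parts are parallel, so
`discr A * discr B` is the square of `2 * tr (A * B) - tr A * tr B`. If `discr A` is negative, or a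
nonzero square in `ℤ`, then `discr B = tr B ^ 2 - 4 * det B` is nonpositive, respectively a square;
either way a nonzero value of `det B` leaves only finitely many values for `tr B`, and then for
`tr (A * B)`. These two traces determine `B` because the trace form on the span of `1` and `A` has
Gram determinant `discr A`.
-/

section CommRing

variable {R : Type*} [CommRing R] {A B C : Matrix (Fin 2) (Fin 2) R}

theorem commute_fin_two_iff :
    Commute A B ↔ A 0 1 * B 1 0 = A 1 0 * B 0 1 ∧
      (A 0 0 - A 1 1) * B 0 1 = A 0 1 * (B 0 0 - B 1 1) ∧
      (A 0 0 - A 1 1) * B 1 0 = A 1 0 * (B 0 0 - B 1 1) := by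
  rw [commute_iff_eq, ← Matrix.ext_iff]
  simp only [Fin.forall_fin_two, mul_apply, Fin.sum_univ_two]
  grind

theorem discr_mul_discr_of_commute (h : Commute A B) :
    A.discr * B.discr = (2 * (A * B).trace - A.trace * B.trace) ^ 2 := by
  obtain ⟨hoff, hupper, -⟩ := commute_fin_two_iff.1 h
  simp only [discr_fin_two, trace_fin_two, det_fin_two, mul_apply, Fin.sum_univ_two]
  linear_combination
    4 * ((A 0 0 - A 1 1) * B 1 0 - A 1 0 * (B 0 0 - B 1 1)) * hupper
      - 4 * (A 0 1 * B 1 0 - A 1 0 * B 0 1) * hoff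

theorem discr_smul_eq_of_commute (h : Commute A B) :
    A.discr • B = ((A.trace ^ 2 - 2 * A.det) * B.trace - A.trace * (A * B).trace) • 1
      + (2 * (A * B).trace - A.trace * B.trace) • A := by
  obtain ⟨hoff, hupper, hlower⟩ := commute_fin_two_iff.1 h
  rw [← Matrix.ext_iff]
  simp only [Fin.forall_fin_two, discr_fin_two, trace_fin_two, det_fin_two, mul_apply,
    Fin.sum_univ_two, Matrix.add_apply, Matrix.smul_apply, smul_eq_mul, one_apply]
  grind

theorem eq_of_commute_of_trace_eq [IsDomain R] (hA : A.discr ≠ 0) (hB : Commute A B)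
    (hC : Commute A C) (htr : B.trace = C.trace) (hmul : (A * B).trace = (A * C).trace) :
    B = C := by
  refine smul_right_injective _ hA ?_
  simp only [discr_smul_eq_of_commute hB, discr_smul_eq_of_commute hC, htr, hmul]

theorem finite_setOf_commute_trace_det [IsDomain R] [NeZero (2 : R)] (hA : A.discr ≠ 0)
    (t d : R) : {B | Commute A B ∧ B.trace = t ∧ B.det = d}.Finite := by
  refine .of_injOn (f := fun B ↦ 2 * (A * B).trace - A.trace * B.trace)
    (t := Polynomial.nthRootsFinset 2 (A.discr * (t ^ 2 - 4 * d))) ?_ ?_ (Finset.finite_toSet _)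
  · rintro B ⟨hB, rfl, rfl⟩
    simp [← discr_fin_two, discr_mul_discr_of_commute hB]
  · rintro B ⟨hB, htB, -⟩ C ⟨hC, htC, -⟩ hBC
    have htr : B.trace = C.trace := htB.trans htC.symm
    refine eq_of_commute_of_trace_eq hA hB hC htr (mul_left_cancel₀ two_ne_zero ?_)
    simpa [htr] using hBC

theorem discr_nonpos_of_commute [LinearOrder R] [IsStrictOrderedRing R] (h : Commute A B)
    (hA : A.discr < 0) : B.discr ≤ 0 :=
  nonpos_of_mul_nonneg_right (discr_mul_discr_of_commute h ▸ sq_nonneg _) hA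

theorem isSquare_discr_of_commute [IsDomain R] [IsIntegrallyClosed R] (h : Commute A B)
    (hA₀ : A.discr ≠ 0) (hA : IsSquare A.discr) : IsSquare B.discr := by
  obtain ⟨k, hk⟩ := hA
  have hsq : k ^ 2 * B.discr = (2 * (A * B).trace - A.trace * B.trace) ^ 2 := by
    rw [← discr_mul_discr_of_commute h, hk, sq]
  obtain ⟨m, hm⟩ : k ∣ 2 * (A * B).trace - A.trace * B.trace :=
    (IsIntegrallyClosed.pow_dvd_pow_iff two_ne_zero).1 ⟨_, hsq.symm⟩
  have hk₀ : k ^ 2 ≠ 0 := by rwa [sq, ← hk]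
  refine ⟨m, mul_left_cancel₀ hk₀ ?_⟩
  rw [hsq, hm, mul_pow, sq m]

end CommRing

theorem abs_le_abs_sq_sub_sq {x y : ℤ} (h : x ^ 2 ≠ y ^ 2) : |x| ≤ |x ^ 2 - y ^ 2| := by
  have hne : |x| - |y| ≠ 0 := sub_ne_zero.2 (mt (sq_eq_sq_iff_abs_eq_abs x y).2 h)
  calc |x| ≤ |x| + |y| := le_add_of_nonneg_right (abs_nonneg y)
    _ ≤ (|x| + |y|) * |(|x| - |y|)| := le_mul_of_one_le_right (by positivity) (Int.one_le_abs hne)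
    _ = |(|x| + |y|) * (|x| - |y|)| := by
      rw [abs_mul, abs_of_nonneg (a := |x| + |y|) (by positivity)]
    _ = |x ^ 2 - y ^ 2| := by rw [← sq_sub_sq, sq_abs, sq_abs]

section Int

variable {A B : Matrix (Fin 2) (Fin 2) ℤ}

theorem abs_trace_le_of_discr_nonpos (hB : B.discr ≤ 0) : |B.trace| ≤ 4 * |B.det| :=
  calc |B.trace| ≤ B.trace ^ 2 := by simpa using Int.le_self_sq |B.trace|
    _ ≤ 4 * B.det := by rwa [discr_fin_two, sub_nonpos] at hB
    _ ≤ 4 * |B.det| := by gcongr; exact le_abs_self _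

theorem abs_trace_le_of_isSquare_discr (hB : IsSquare B.discr) (hdet : B.det ≠ 0) :
    |B.trace| ≤ 4 * |B.det| := by
  obtain ⟨m, hm⟩ := hB
  have hdiff : B.trace ^ 2 - m ^ 2 = 4 * B.det := by
    rw [discr_fin_two] at hm
    linear_combination hm
  have hne : B.trace ^ 2 ≠ m ^ 2 := by
    rw [← sub_ne_zero, hdiff]
    exact mul_ne_zero four_ne_zero hdet
  simpa [hdiff, abs_mul] using abs_le_abs_sq_sub_sq hne

theorem finite_setOf_commute_det (hA : A.discr < 0 ∨ A.discr ≠ 0 ∧ IsSquare A.discr) {d : ℤ}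
    (hd : d ≠ 0) : {B | Commute A B ∧ B.det = d}.Finite := by
  have hA₀ : A.discr ≠ 0 := hA.elim ne_of_lt And.left
  have hfin : (⋃ t ∈ Set.Icc (-(4 * |d|)) (4 * |d|),
      {B | Commute A B ∧ B.trace = t ∧ B.det = d}).Finite :=
    (Set.finite_Icc _ _).biUnion fun t _ ↦ finite_setOf_commute_trace_det hA₀ t d
  refine hfin.subset ?_
  rintro B ⟨hB, rfl⟩
  have htr : |B.trace| ≤ 4 * |B.det| := by
    rcases hA with hneg | ⟨-, hsq⟩
    · exact abs_trace_le_of_discr_nonpos (discr_nonpos_of_commute hB hneg)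
    · exact abs_trace_le_of_isSquare_discr (isSquare_discr_of_commute hB hA₀ hsq) hd
  exact Set.mem_biUnion (abs_le.1 htr) ⟨hB, rfl, rfl⟩

end Int

theorem centralizer_of_standard_finite_order_is_finite_general (M : Matrix (Fin 2) (Fin 2) ℤ)
    (hM : M.discr < 0 ∨ M.discr ≠ 0 ∧ IsSquare M.discr) :
    {g : GL (Fin 2) ℤ | (g : Matrix (Fin 2) (Fin 2) ℤ) * M
        = M * (g : Matrix (Fin 2) (Fin 2) ℤ)}.Finite := by
  have hfin : ({B | Commute M B ∧ B.det = 1} ∪ {B | Commute M B ∧ B.det = -1}).Finite :=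
    (finite_setOf_commute_det hM one_ne_zero).union
      (finite_setOf_commute_det hM (neg_ne_zero.2 one_ne_zero))
  refine (hfin.preimage Units.val_injective.injOn).subset fun g hg ↦ ?_
  have hdet : g.val.det = 1 ∨ g.val.det = -1 :=
    Int.isUnit_iff.1 ((isUnit_iff_isUnit_det _).1 g.isUnit)
  exact hdet.imp (⟨hg.symm, ·⟩) (⟨hg.symm, ·⟩)

/-- For each of the five standard finite-order matrices `P` in `GL(2,ℤ)`,
the centralizer of `P` in `GL(2,ℤ)` is finite. -/
theorem centralizer_of_standard_finite_order_is_finite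
    (M : Matrix (Fin 2) (Fin 2) ℤ)
    (hM : M ∈ ({!![1, 0; 0, -1], !![0, 1; 1, 0], !![0, 1; -1, -1],
          !![0, 1; -1, 0], !![0, 1; -1, 1]} : Set (Matrix (Fin 2) (Fin 2) ℤ))) :
    {g : GL (Fin 2) ℤ | (g : Matrix (Fin 2) (Fin 2) ℤ) * M
        = M * (g : Matrix (Fin 2) (Fin 2) ℤ)}.Finite := by
  apply centralizer_of_standard_finite_order_is_finite_general
  have hsq : IsSquare (4 : ℤ) := ⟨2, by norm_num⟩
  -- The five discriminants are `4`, `4`, `-3`, `-4` and `-3`.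
  rcases hM with rfl | rfl | rfl | rfl | rfl <;> simp [discr_fin_two, trace_fin_two, hsq]
end

section
/- Let H be an infinite subgroup of GL(2,ℤ) containing an infinite cyclic subgroup of finite index (equivalently, H has two ends). Then one of the following holds: (1) H is infinite cyclic; (2) H is generated by an element of infinite order together with -I, and is isomorphic to ℤ × ℤ/2ℤ; (3) H = ⟨A,B⟩ where A² = B² = I; (4) H = ⟨A,B,-I⟩ where A² = B² = I; (5) H = ⟨A,B⟩ where A has order 4 and B² = I; (6) H = ⟨A,B⟩ where A and B each have order 4. In cases (3)–(6), neither A nor B equals -I. -/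
open Matrix Subgroup

/-!
A virtually infinite cyclic group has a normal subgroup `⟨t⟩ ≅ ℤ` of finite index. The transfer
maps the centralizer of `t` to `ℤ` with kernel its set `T` of torsion elements, and any two elements
not commuting with `t` invert it, hence have finite order and a product commuting with `t`. So the
group is generated by `T` together with either one element of infinite order, or two elements whose
squares lie in `T`.

In `GL(2, ℤ)` one has `T ⊆ {1, -1}`: a non-scalar `x` has finite order exactly when the unit group
of the quadratic order `ℤ[x]` is finite, which depends only on the discriminant of `x` up to nonzero
square factors. Commuting non-scalar matrices lie in the same quadratic algebra, so they have the
same discriminant in this sense, and both or neither have finite order.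
-/

namespace TwoEnded

section CommRing

variable {R : Type*} [CommRing R] {A B : Matrix (Fin 2) (Fin 2) R}

lemma mem_range_scalar_iff :
    A ∈ Set.range (scalar (Fin 2)) ↔ A 0 1 = 0 ∧ A 1 0 = 0 ∧ A 0 0 = A 1 1 := by
  constructor
  · rintro ⟨r, rfl⟩
    simp
  · rintro ⟨h01, h10, hdiag⟩
    refine ⟨A 0 0, ?_⟩
    ext i j
    fin_cases i <;> fin_cases j <;> simp [h01, h10, hdiag]

lemma sq_eq_trace_smul_sub_det_smul_one (A : Matrix (Fin 2) (Fin 2) R) :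
    A ^ 2 = A.trace • A - A.det • (1 : Matrix (Fin 2) (Fin 2) R) := by
  nontriviality R
  have h := A.aeval_self_charpoly
  rw [charpoly_fin_two] at h
  simp only [map_add, map_sub, map_mul, map_pow, Polynomial.aeval_X, Polynomial.aeval_C,
    Algebra.algebraMap_eq_smul_one, smul_mul_assoc, one_mul] at h
  rw [← sub_eq_zero, ← h]
  abel

lemma trace_sq (A : Matrix (Fin 2) (Fin 2) R) : (A ^ 2).trace = A.trace ^ 2 - 2 * A.det := by
  rw [sq_eq_trace_smul_sub_det_smul_one, trace_sub, trace_smul, trace_smul, trace_one,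
    Fintype.card_fin, smul_eq_mul, smul_eq_mul]
  push_cast
  ring

lemma discr_eq (A : Matrix (Fin 2) (Fin 2) R) :
    A.discr = (A 0 0 - A 1 1) ^ 2 + 4 * A 0 1 * A 1 0 := by
  rw [discr_fin_two, trace_fin_two, det_fin_two]
  ring

lemma exists_mul_entries_eq_of_commute (h : Commute A B) (hB : B ∉ Set.range (scalar (Fin 2))) :
    ∃ k l : R, l ≠ 0 ∧ k * B 0 1 = l * A 0 1 ∧ k * B 1 0 = l * A 1 0 ∧
      k * (B 0 0 - B 1 1) = l * (A 0 0 - A 1 1) := by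
  have h00 := congrFun₂ h.eq 0 0
  have h01 := congrFun₂ h.eq 0 1
  have h10 := congrFun₂ h.eq 1 0
  simp only [Matrix.mul_apply, Fin.sum_univ_two] at h00 h01 h10
  rw [mem_range_scalar_iff, ← sub_eq_zero (a := B 0 0)] at hB
  by_cases b01 : B 0 1 = 0
  · by_cases b10 : B 1 0 = 0
    · exact ⟨A 0 0 - A 1 1, B 0 0 - B 1 1, by tauto, by grind, by grind, by grind⟩
    · exact ⟨A 1 0, B 1 0, b10, by grind, by grind, by grind⟩
  · exact ⟨A 0 1, B 0 1, b01, by grind, by grind, by grind⟩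

variable [IsDomain R]

lemma mem_range_scalar_of_smul_eq {r s : R} (hr : r ≠ 0) (h : r • A = s • 1) :
    A ∈ Set.range (scalar (Fin 2)) := by
  have hentry (i j : Fin 2) : r * A i j = s * (1 : Matrix (Fin 2) (Fin 2) R) i j :=
    congrFun₂ h i j
  rw [mem_range_scalar_iff]
  refine ⟨?_, ?_, mul_left_cancel₀ hr ?_⟩
  · simpa [hr] using hentry 0 1
  · simpa [hr] using hentry 1 0
  · simp [hentry]

lemma exists_sq_mul_discr_eq_of_commute (h : Commute A B) (hA : A ∉ Set.range (scalar (Fin 2)))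
    (hB : B ∉ Set.range (scalar (Fin 2))) :
    ∃ k l : R, k ≠ 0 ∧ l ≠ 0 ∧ k ^ 2 * B.discr = l ^ 2 * A.discr := by
  obtain ⟨k, l, hl, h01, h10, hdiag⟩ := exists_mul_entries_eq_of_commute h hB
  refine ⟨k, l, ?_, hl, ?_⟩
  · rintro rfl
    simp only [zero_mul, zero_eq_mul, hl, false_or, sub_eq_zero] at h01 h10 hdiag
    exact hA (mem_range_scalar_iff.2 ⟨h01, h10, hdiag⟩)
  · rw [discr_eq, discr_eq]
    linear_combination (k * (B 0 0 - B 1 1) + l * (A 0 0 - A 1 1)) * hdiag +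
      4 * k * B 1 0 * h01 + 4 * l * A 0 1 * h10

end CommRing

section Ordered

variable {R : Type*} [CommRing R] [LinearOrder R] [IsStrictOrderedRing R]
  {A : Matrix (Fin 2) (Fin 2) R}

lemma exists_pow_succ_eq_smul_sub_smul_one (hdet : A.det = 1) (htr : 2 ≤ |A.trace|) (n : ℕ) :
    ∃ a b : R, A ^ (n + 1) = a • A - b • (1 : Matrix (Fin 2) (Fin 2) R) ∧ |b| < |a| := by
  induction n with
  | zero => exact ⟨1, 0, by simp, by simp⟩
  | succ n ih =>
    obtain ⟨a, b, hpow, hlt⟩ := ih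
    refine ⟨a * A.trace - b, a, ?_, ?_⟩
    · rw [pow_succ, hpow, sub_mul, smul_mul_assoc, ← sq, sq_eq_trace_smul_sub_det_smul_one, hdet,
        smul_mul_assoc, one_mul]
      module
    · calc |a| < 2 * |a| - |b| := by linarith
        _ ≤ |a * A.trace| - |b| := by
          rw [abs_mul, mul_comm |a|]
          gcongr
        _ ≤ |a * A.trace - b| := abs_sub_abs_le_abs_sub _ _

lemma mem_range_scalar_of_isOfFinOrder (hA : IsOfFinOrder A) (hdet : A.det = 1)
    (htr : 2 ≤ |A.trace|) : A ∈ Set.range (scalar (Fin 2)) := by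
  obtain ⟨n, hn, hpow⟩ := isOfFinOrder_iff_pow_eq_one.1 hA
  obtain ⟨a, b, hab, hlt⟩ := exists_pow_succ_eq_smul_sub_smul_one hdet htr (n - 1)
  rw [Nat.sub_add_cancel hn, hpow] at hab
  have ha : a ≠ 0 := abs_pos.1 ((abs_nonneg b).trans_lt hlt)
  refine mem_range_scalar_of_smul_eq ha (s := 1 + b) ?_
  rw [add_smul, one_smul]
  exact eq_add_of_sub_eq hab.symm

end Ordered

section Int

/-- The discriminants `d` for which the quadratic order of discriminant `d` has a finite unit group:
the negative ones and the nonzero squares (the order then embeds in `ℤ × ℤ`). An invertible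
non-scalar integral `2 × 2` matrix `A` generates the order of discriminant `A.discr`, so this
predicate decides whether `A` has finite order. -/
def IsFiniteUnitDiscr (d : ℤ) : Prop :=
  d < 0 ∨ d ≠ 0 ∧ IsSquare d

lemma IsFiniteUnitDiscr.of_sq_mul_eq {d e k l : ℤ} (hd : IsFiniteUnitDiscr d) (hk : k ≠ 0)
    (hl : l ≠ 0) (h : k ^ 2 * e = l ^ 2 * d) : IsFiniteUnitDiscr e := by
  rcases hd with hneg | ⟨hd0, m, rfl⟩
  · exact .inl (neg_of_mul_neg_right (h ▸ mul_neg_of_pos_of_neg (by positivity) hneg) (sq_nonneg k))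
  · have hdvd : k ∣ l * m := (Int.pow_dvd_pow_iff two_ne_zero).1 ⟨e, by rw [h]; ring⟩
    obtain ⟨r, hr⟩ := hdvd
    have he : e = r * r := mul_left_cancel₀ (pow_ne_zero 2 hk) <| by
      linear_combination h + (l * m + k * r) * hr
    refine .inr ⟨fun he0 ↦ ?_, r, he⟩
    simp [he0, hl, hd0] at h

variable {A : Matrix (Fin 2) (Fin 2) ℤ}

lemma isFiniteUnitDiscr_discr_of_isOfFinOrder (hA : IsOfFinOrder A)
    (hscalar : A ∉ Set.range (scalar (Fin 2))) : IsFiniteUnitDiscr A.discr := by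
  have hunit : IsUnit A.det := A.isUnit_iff_isUnit_det.1 hA.isUnit
  rw [discr_fin_two]
  rcases Int.isUnit_iff.1 hunit with hdet | hdet
  · left
    have htr : |A.trace| < 2 := by
      by_contra! htr
      exact hscalar (mem_range_scalar_of_isOfFinOrder hA hdet htr)
    rw [hdet]
    linarith [sq_lt_sq' (abs_lt.1 htr).1 (abs_lt.1 htr).2]
  · right
    have htr : A.trace = 0 := by
      by_contra htr
      have hsq : A ^ 2 ∈ Set.range (scalar (Fin 2)) := by
        refine mem_range_scalar_of_isOfFinOrder hA.pow (by simp [hdet]) ?_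
        rw [trace_sq, hdet]
        exact le_trans (by linarith [sq_nonneg A.trace]) (le_abs_self _)
      obtain ⟨r, hr⟩ := hsq
      refine hscalar (mem_range_scalar_of_smul_eq htr (s := r - 1) ?_)
      rw [sq_eq_trace_smul_sub_det_smul_one, hdet, scalar_apply, ← smul_one_eq_diagonal] at hr
      rw [sub_smul, one_smul, hr, neg_one_smul]
      abel
    rw [htr, hdet]
    exact ⟨by norm_num, 2, by norm_num⟩

lemma isOfFinOrder_of_discr_neg (hunit : IsUnit A.det) (h : A.discr < 0) : IsOfFinOrder A := by
  rw [discr_fin_two] at h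
  have hdet : A.det = 1 := (Int.isUnit_iff.1 hunit).resolve_right (by nlinarith)
  rw [hdet] at h
  have hsq := sq_eq_trace_smul_sub_det_smul_one A
  rw [hdet, one_smul] at hsq
  have hcases : A.trace = -1 ∨ A.trace = 0 ∨ A.trace = 1 := by
    have := abs_lt.1 (abs_lt_of_sq_lt_sq (by linarith : A.trace ^ 2 < 2 ^ 2) zero_le_two)
    omega
  rcases hcases with htr | htr | htr <;> rw [htr] at hsq
  · have hcube : A ^ 3 = 1 := by
      rw [pow_succ', hsq, neg_one_smul, mul_sub, mul_neg, ← sq, hsq]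
      simp
    exact isOfFinOrder_iff_pow_eq_one.2 ⟨3, by norm_num, hcube⟩
  · rw [zero_smul, zero_sub] at hsq
    exact isOfFinOrder_iff_pow_eq_one.2 ⟨4, by norm_num, by rw [pow_mul A 2 2, hsq, neg_one_sq]⟩
  · have hcube : A ^ 3 = -1 := by
      rw [pow_succ', hsq, one_smul, mul_sub, ← sq, hsq]
      simp
    exact isOfFinOrder_iff_pow_eq_one.2 ⟨6, by norm_num, by rw [pow_mul A 3 2, hcube, neg_one_sq]⟩

lemma eq_zero_of_sq_sub_sq_eq_four {x y : ℤ} (h : x ^ 2 - y ^ 2 = 4) : y = 0 := by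
  have hmul : (x - y) * (x + y) = 4 := by linear_combination h
  have hdvd : x - y ∣ 4 := ⟨_, hmul.symm⟩
  have hle : x - y ≤ 4 := Int.le_of_dvd (by norm_num) hdvd
  have hge : -4 ≤ x - y := neg_le.1 (Int.le_of_dvd (by norm_num) (neg_dvd.2 hdvd))
  generalize hu : x - y = u at *
  interval_cases u <;> omega

lemma isOfFinOrder_of_isFiniteUnitDiscr (hunit : IsUnit A.det) (h : IsFiniteUnitDiscr A.discr) :
    IsOfFinOrder A := by
  rcases h with hneg | ⟨hne, m, hm⟩
  · exact isOfFinOrder_of_discr_neg hunit hneg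
  · rw [discr_fin_two] at hm hne
    rcases Int.isUnit_iff.1 hunit with hdet | hdet <;> rw [hdet] at hm hne
    · have hm0 : m = 0 := eq_zero_of_sq_sub_sq_eq_four (x := A.trace) (by linear_combination hm)
      exact absurd (by rw [hm, hm0, mul_zero]) hne
    · have htr : A.trace = 0 := eq_zero_of_sq_sub_sq_eq_four (x := m) (by linear_combination -hm)
      refine isOfFinOrder_iff_pow_eq_one.2 ⟨2, zero_lt_two, ?_⟩
      rw [sq_eq_trace_smul_sub_det_smul_one, hdet, htr]
      simp

end Int

section Group

variable {G : Type*} [Group G]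

lemma exists_normal_finiteIndex_zpowers [Infinite G] (Z : Subgroup G) [IsCyclic Z]
    [Z.FiniteIndex] :
    ∃ t : G, ¬ IsOfFinOrder t ∧ (zpowers t).Normal ∧ (zpowers t).FiniteIndex := by
  have hcyc : IsCyclic Z.normalCore := isCyclic_of_le Z.normalCore_le
  obtain ⟨t, ht⟩ := (Subgroup.isCyclic_iff_exists_zpowers_eq_top _).1 hcyc
  have hindex : (zpowers t).FiniteIndex := ht ▸ inferInstance
  refine ⟨t, fun hfin ↦ ?_, ht ▸ inferInstance, hindex⟩
  have : Finite (zpowers t) := finite_zpowers.2 hfin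
  have := Finite.of_subgroup_quotient (zpowers t)
  exact not_finite G

/-- The elements of finite order in the centralizer of `t`. When `⟨t⟩` is infinite, normal and of
finite index, this is the kernel of the map from the group onto `ℤ` or onto the infinite dihedral
group. It is encoded as a set, since only its role as a set of generators matters. -/
def torsionCentralizer (t : G) : Set G := {s | IsOfFinOrder s ∧ Commute s t}

variable {t : G}

lemma exists_hom_int_eq_one_iff_isOfFinOrder [(zpowers t).FiniteIndex] (ht : ¬ IsOfFinOrder t)
    (hcentral : ∀ g, Commute g t) :
    ∃ f : G →* Multiplicative ℤ, ∀ g, f g = 1 ↔ IsOfFinOrder g := by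
  have : Infinite (zpowers t) := (infinite_zpowers.2 ht).to_subtype
  let e : zpowers t ≃* Multiplicative ℤ := intCyclicMulEquiv.symm
  have hmem (g x : G) (hx : g⁻¹ * x * g ∈ zpowers t) : g⁻¹ * x * g = x := by
    obtain ⟨k, hk : t ^ k = g⁻¹ * x * g⟩ := hx
    have hcomm : g * (g⁻¹ * x * g) = g⁻¹ * x * g * g := hk ▸ ((hcentral g).zpow_right k).eq
    rw [mul_assoc g⁻¹ x g, mul_inv_cancel_left, ← mul_assoc] at hcomm
    exact (mul_right_cancel hcomm).symm
  -- Since `t` is central, the transfer to `⟨t⟩` is `g ↦ g ^ [G : ⟨t⟩]`.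
  have htransfer (g : G) := MonoidHom.transfer_eq_pow e.toMonoidHom g (fun k x ↦ hmem x (g ^ k))
  refine ⟨MonoidHom.transfer e.toMonoidHom, fun g ↦ ⟨fun hg ↦ ?_, fun hg ↦ ?_⟩⟩
  · rw [htransfer] at hg
    refine isOfFinOrder_iff_pow_eq_one.2
      ⟨_, Nat.pos_of_ne_zero (FiniteIndex.index_ne_zero (H := zpowers t)), ?_⟩
    simpa using hg
  · exact (isOfFinOrder_iff_eq_one _).1 (MonoidHom.isOfFinOrder _ hg)

lemma exists_forall_commute_mul_zpow_mem [(zpowers t).FiniteIndex] (ht : ¬ IsOfFinOrder t) :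
    ∃ c, ¬ IsOfFinOrder c ∧ Commute c t ∧
      ∀ g, Commute g t → ∃ k : ℤ, g * c ^ k ∈ torsionCentralizer t := by
  let C := centralizer {t}
  let τ : C := ⟨t, mem_centralizer_singleton_iff.2 rfl⟩
  have hval {x : C} : IsOfFinOrder (x : G) ↔ IsOfFinOrder x :=
    C.subtype_injective.isOfFinOrder_iff
  have hindex : (zpowers τ).FiniteIndex := by
    have hcomap : zpowers τ = (zpowers t).subgroupOf C := by
      rw [← comap_map_eq_self_of_injective C.subtype_injective (zpowers τ), MonoidHom.map_zpowers]
      rfl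
    exact hcomap ▸ inferInstance
  obtain ⟨f, hf⟩ := exists_hom_int_eq_one_iff_isOfFinOrder (mt hval.2 ht : ¬ IsOfFinOrder τ)
    fun g ↦ Subtype.ext (mem_centralizer_singleton_iff.1 g.2)
  obtain ⟨⟨_, c, rfl⟩, hc⟩ := IsCyclic.exists_generator (α := f.range)
  have key (g : C) : ∃ k : ℤ, IsOfFinOrder (g * c ^ k) := by
    obtain ⟨k, hk⟩ := hc ⟨f g, g, rfl⟩
    refine ⟨-k, (hf _).1 ?_⟩
    have hfg : f c ^ k = f g := congrArg Subtype.val hk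
    rw [map_mul, map_zpow, ← hfg, _root_.zpow_neg, mul_inv_cancel]
  refine ⟨c, fun hfin ↦ ?_, ?_, fun g hg ↦ ?_⟩
  · have hfc : f c = 1 := (hf c).2 (hval.1 hfin)
    obtain ⟨k, hk⟩ := key τ
    rw [← hf, map_mul, map_zpow, hfc, _root_.one_zpow, mul_one, hf, ← hval] at hk
    exact ht hk
  · exact mem_centralizer_singleton_iff.1 c.2
  · obtain ⟨k, hk⟩ := key ⟨g, mem_centralizer_singleton_iff.2 hg⟩
    exact ⟨k, hval.2 hk, hg.mul_left (Commute.zpow_left (mem_centralizer_singleton_iff.1 c.2) k)⟩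

section Normal

variable [(zpowers t).Normal]

lemma semiconjBy_inv_of_not_commute (ht : ¬ IsOfFinOrder t) {g : G} (hg : ¬ Commute g t) :
    SemiconjBy g t t⁻¹ := by
  have hconj : zpowers t = zpowers (g * t * g⁻¹) := by
    rw [← MulAut.conj_apply, ← MulEquiv.coe_toMonoidHom, ← MonoidHom.map_zpowers]
    exact (Normal.map_conj_eq _ g).symm
  rcases (zpowers_eq_zpowers_iff ht).1 hconj with h | h
  · exact absurd (eq_mul_inv_iff_mul_eq.1 h).symm hg
  · exact (eq_mul_inv_iff_mul_eq.1 h).symm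

lemma commute_mul_of_not_commute (ht : ¬ IsOfFinOrder t) {g h : G} (hg : ¬ Commute g t)
    (hh : ¬ Commute h t) : Commute (g * h) t := by
  have hinv : SemiconjBy g t⁻¹ t := by
    simpa only [inv_inv] using (semiconjBy_inv_of_not_commute ht hg).inv_right
  exact hinv.mul_left (semiconjBy_inv_of_not_commute ht hh)

lemma isOfFinOrder_of_not_commute [(zpowers t).FiniteIndex] (ht : ¬ IsOfFinOrder t) {g : G}
    (hg : ¬ Commute g t) : IsOfFinOrder g := by
  obtain ⟨m, hm : t ^ m = g ^ (zpowers t).index⟩ := (zpowers t).pow_index_mem g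
  have hconj : SemiconjBy g (t ^ m) (t⁻¹ ^ m) :=
    (semiconjBy_inv_of_not_commute ht hg).zpow_right m
  have hcomm : Commute g (t ^ m) := hm ▸ Commute.self_pow g _
  have hinv : t ^ m = t ^ (-m) := by
    rw [← _root_.inv_zpow']
    exact mul_right_cancel (hcomm.eq.symm.trans hconj.eq)
  have hm0 : m = 0 := by
    have := injective_zpow_iff_not_isOfFinOrder.2 ht hinv
    omega
  refine isOfFinOrder_iff_pow_eq_one.2
    ⟨_, Nat.pos_of_ne_zero (FiniteIndex.index_ne_zero (H := zpowers t)), ?_⟩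
  rw [← hm, hm0, zpow_zero]

lemma sq_mem_torsionCentralizer [(zpowers t).FiniteIndex] (ht : ¬ IsOfFinOrder t) {g : G}
    (hg : ¬ Commute g t) : g ^ 2 ∈ torsionCentralizer t :=
  ⟨(isOfFinOrder_of_not_commute ht hg).pow, sq g ▸ commute_mul_of_not_commute ht hg hg⟩

end Normal

theorem exists_closure_union_torsionCentralizer_eq_top [Infinite G] (Z : Subgroup G) [IsCyclic Z]
    [Z.FiniteIndex] :
    ∃ t : G, ¬ IsOfFinOrder t ∧
      ((∃ c, ¬ IsOfFinOrder c ∧ Subgroup.closure ({c} ∪ torsionCentralizer t) = ⊤) ∨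
        ∃ a b, ¬ Commute a t ∧ ¬ Commute b t ∧ a ^ 2 ∈ torsionCentralizer t ∧
          b ^ 2 ∈ torsionCentralizer t ∧ Subgroup.closure ({a, b} ∪ torsionCentralizer t) = ⊤) := by
  obtain ⟨t, ht, hnormal, hindex⟩ := exists_normal_finiteIndex_zpowers Z
  obtain ⟨c, hc, hct, hgen⟩ := exists_forall_commute_mul_zpow_mem ht
  have hmem {L : Subgroup G} (hcL : c ∈ L) (hL : torsionCentralizer t ⊆ L) {g : G}
      (hg : Commute g t) : g ∈ L := by
    obtain ⟨k, hk⟩ := hgen g hg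
    exact (mul_mem_cancel_right (zpow_mem hcL k)).1 (hL hk)
  refine ⟨t, ht, ?_⟩
  by_cases hcentral : ∀ g, Commute g t
  · left
    refine ⟨c, hc, eq_top_iff.2 fun g _ ↦ hmem (subset_closure (by simp)) ?_ (hcentral g)⟩
    exact Set.subset_union_right.trans subset_closure
  · right
    push Not at hcentral
    obtain ⟨b, hb⟩ := hcentral
    have ha : ¬ Commute (c * b) t := fun h ↦ hb (by simpa using hct.inv_left.mul_left h)
    refine ⟨c * b, b, ha, hb, sq_mem_torsionCentralizer ht ha, sq_mem_torsionCentralizer ht hb, ?_⟩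
    set L := Subgroup.closure ({c * b, b} ∪ torsionCentralizer t)
    have hbL : b ∈ L := subset_closure (by simp)
    have hcL : c ∈ L := (mul_mem_cancel_right hbL).1 (subset_closure (by simp))
    have hTL : torsionCentralizer t ⊆ L := Set.subset_union_right.trans subset_closure
    refine eq_top_iff.2 fun g _ ↦ ?_
    by_cases hg : Commute g t
    · exact hmem hcL hTL hg
    · exact (mul_mem_cancel_right hbL).1 (hmem hcL hTL (commute_mul_of_not_commute ht hg hb))

lemma closure_union_eq_or_of_subset_pair {S T : Set G} {z : G} (hT : T ⊆ {1, z}) :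
    Subgroup.closure (S ∪ T) = Subgroup.closure S ∨
      Subgroup.closure (S ∪ T) = Subgroup.closure (S ∪ {z}) := by
  rw [Subgroup.closure_union, Subgroup.closure_union]
  rcases Set.subset_pair_iff_eq.1 hT with rfl | rfl | rfl | rfl
  · simp
  · simp
  · exact .inr rfl
  · exact .inr (by rw [closure_insert_one])

lemma closure_insert_pair_of_mem {a b z : G} (hz : z ∈ Subgroup.closure {a, b}) :
    Subgroup.closure {a, b, z} = Subgroup.closure {a, b} := by
  refine le_antisymm ((closure_le _).2 ?_) (closure_mono (by grind))
  rintro x (rfl | rfl | rfl)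
  exacts [subset_closure (by simp), subset_closure (by simp), hz]

lemma eq_closure_pair_of_sq_eq {H : Subgroup G} {a b z : G} (h : a ^ 2 = z ∨ b ^ 2 = z)
    (hH : H = Subgroup.closure {a, b} ∨ H = Subgroup.closure {a, b, z}) :
    H = Subgroup.closure {a, b} := by
  have hz : z ∈ Subgroup.closure {a, b} := by
    rcases h with rfl | rfl <;> exact pow_mem (subset_closure (by simp)) 2
  rwa [closure_insert_pair_of_mem hz, or_self] at hH

lemma nonempty_closure_pair_mulEquiv {c z : G} {n : ℕ} [NeZero n] (hc : ¬ IsOfFinOrder c)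
    (hz : orderOf z = n) (hcz : Commute c z) :
    Nonempty (Subgroup.closure {c, z} ≃* Multiplicative ℤ × Multiplicative (ZMod n)) := by
  have hzfin : IsOfFinOrder z := orderOf_pos_iff.1 (hz ▸ Nat.pos_of_neZero n)
  have : Infinite (zpowers c) := (infinite_zpowers.2 hc).to_subtype
  have hcomm (a : zpowers c) (b : zpowers z) :
      Commute ((zpowers c).subtype a) ((zpowers z).subtype b) := by
    obtain ⟨⟨_, i, rfl⟩, ⟨_, j, rfl⟩⟩ := a, b
    exact hcz.zpow_zpow i j
  have hdisjoint : _root_.Disjoint (zpowers c) (zpowers z) := by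
    rw [Subgroup.disjoint_def]
    rintro x ⟨i, rfl⟩ hxz
    obtain ⟨m, hm, hpow⟩ := isOfFinOrder_iff_pow_eq_one.1 (hzfin.of_mem_zpowers hxz)
    have him : i * m = 0 := injective_zpow_iff_not_isOfFinOrder.2 hc <| by
      simpa only [_root_.zpow_mul, zpow_natCast, zpow_zero] using hpow
    have hi : i = 0 := (mul_eq_zero.1 him).resolve_right (by positivity)
    simp only [hi, zpow_zero]
  let f := MonoidHom.noncommCoprod (zpowers c).subtype (zpowers z).subtype hcomm
  have hf : Function.Injective f := by
    rw [MonoidHom.noncommCoprod_injective, range_subtype, range_subtype]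
    exact ⟨subtype_injective _, subtype_injective _, hdisjoint⟩
  have hrange : f.range = Subgroup.closure {c, z} := by
    rw [MonoidHom.noncommCoprod_range, range_subtype, range_subtype, zpowers_eq_closure,
      zpowers_eq_closure, ← Subgroup.closure_union, Set.singleton_union]
  have e : zpowers z ≃* Multiplicative (ZMod n) :=
    mulEquivOfCyclicCardEq (((Nat.card_zpowers z).trans hz).trans (Nat.card_zmod n).symm)
  exact ⟨(MulEquiv.subgroupCongr hrange.symm).trans
    ((MonoidHom.ofInjective hf).symm.trans (intCyclicMulEquiv.symm.prodCongr e))⟩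

end Group

section GeneralLinear

variable {x t : GL (Fin 2) ℤ}

lemma eq_one_or_eq_neg_one_of_mem_range_scalar (hx : x.val ∈ Set.range (scalar (Fin 2))) :
    x = 1 ∨ x = -1 := by
  obtain ⟨r, hr⟩ := hx
  have hunit : IsUnit r := by
    have hdet : IsUnit (scalar (Fin 2) r).det := hr ▸ (isUnit_iff_isUnit_det _).1 x.isUnit
    rwa [scalar_apply, det_diagonal, Fin.prod_const, isUnit_pow_iff two_ne_zero] at hdet
  rcases Int.isUnit_iff.1 hunit with rfl | rfl
  · exact .inl (Units.ext (by rw [← hr]; simp))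
  · exact .inr (Units.ext (by rw [← hr]; simp))

lemma eq_one_or_eq_neg_one_of_commute (hx : IsOfFinOrder x) (ht : ¬ IsOfFinOrder t)
    (h : Commute x t) : x = 1 ∨ x = -1 := by
  by_contra hne
  have hxs : x.val ∉ Set.range (scalar (Fin 2)) := mt eq_one_or_eq_neg_one_of_mem_range_scalar hne
  have hts : t.val ∉ Set.range (scalar (Fin 2)) := fun hts ↦ ht <| by
    rcases eq_one_or_eq_neg_one_of_mem_range_scalar hts with rfl | rfl
    · exact .one
    · exact isOfFinOrder_iff_pow_eq_one.2 ⟨2, zero_lt_two, neg_one_sq⟩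
  obtain ⟨k, l, hk, hl, hkl⟩ := exists_sq_mul_discr_eq_of_commute (congrArg Units.val h.eq) hxs hts
  refine ht (Units.isOfFinOrder_val.1 (isOfFinOrder_of_isFiniteUnitDiscr ?_ ?_))
  · exact (isUnit_iff_isUnit_det _).1 t.isUnit
  · exact (isFiniteUnitDiscr_discr_of_isOfFinOrder (Units.isOfFinOrder_val.2 hx) hxs).of_sq_mul_eq
      hk hl hkl

lemma neg_one_ne_one : (-1 : GL (Fin 2) ℤ) ≠ 1 := fun h ↦ by
  simpa using congrArg (fun x : GL (Fin 2) ℤ ↦ x.val 0 0) h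

lemma orderOf_neg_one_eq_two : orderOf (-1 : GL (Fin 2) ℤ) = 2 :=
  orderOf_eq_prime neg_one_sq neg_one_ne_one

lemma orderOf_eq_four_of_sq_eq_neg_one (hx : x ^ 2 = -1) : orderOf x = 4 :=
  orderOf_eq_prime_pow (p := 2) (n := 1) (by simp [hx, neg_one_ne_one])
    (by rw [show 2 ^ (1 + 1) = 2 * 2 from rfl, pow_mul, hx, neg_one_sq])

theorem exists_eq_closure_union {H Z : Subgroup (GL (Fin 2) ℤ)} [Infinite H] [IsCyclic Z]
    (hZ : Z ≤ H) [(Z.subgroupOf H).FiniteIndex] :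
    ∃ T ⊆ ({1, -1} : Set (GL (Fin 2) ℤ)),
      (∃ C, ¬ IsOfFinOrder C ∧ H = Subgroup.closure ({C} ∪ T)) ∨
        ∃ A B, A ≠ -1 ∧ B ≠ -1 ∧ A ^ 2 ∈ T ∧ B ^ 2 ∈ T ∧ H = Subgroup.closure ({A, B} ∪ T) := by
  have : IsCyclic (Z.subgroupOf H) :=
    isCyclic_of_injective (subgroupOfEquivOfLe hZ).toMonoidHom (subgroupOfEquivOfLe hZ).injective
  have hfin (x : H) : IsOfFinOrder (x : GL (Fin 2) ℤ) ↔ IsOfFinOrder x :=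
    H.subtype_injective.isOfFinOrder_iff
  have hclosure {S : Set H} (hS : Subgroup.closure S = ⊤) :
      H = Subgroup.closure (H.subtype '' S) := by
    rw [← MonoidHom.map_closure, hS, ← MonoidHom.range_eq_map, range_subtype]
  obtain ⟨t, ht, h⟩ := exists_closure_union_torsionCentralizer_eq_top (Z.subgroupOf H)
  have hne {x : H} (hx : ¬ Commute x t) : (x : GL (Fin 2) ℤ) ≠ -1 := fun h ↦
    hx (Subtype.ext (by simp [h]))
  refine ⟨H.subtype '' torsionCentralizer t, ?_, ?_⟩
  · rintro _ ⟨s, ⟨hs, hst⟩, rfl⟩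
    exact eq_one_or_eq_neg_one_of_commute ((hfin s).2 hs) (mt (hfin t).1 ht)
      (congrArg Subtype.val hst)
  · rcases h with ⟨c, hc, hgen⟩ | ⟨a, b, ha, hb, ha2, hb2, hgen⟩
    · refine .inl ⟨c, mt (hfin c).1 hc, (hclosure hgen).trans ?_⟩
      rw [Set.image_union, Set.image_singleton, subtype_apply]
    · refine .inr ⟨a, b, hne ha, hne hb, ⟨_, ha2, rfl⟩, ⟨_, hb2, rfl⟩, (hclosure hgen).trans ?_⟩
      rw [Set.image_union, Set.image_pair, subtype_apply, subtype_apply]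

theorem eq_closure_cyclic_or_dihedral {H Z : Subgroup (GL (Fin 2) ℤ)} [Infinite H] [IsCyclic Z]
    (hZ : Z ≤ H) [(Z.subgroupOf H).FiniteIndex] :
    (∃ C, ¬ IsOfFinOrder C ∧ (H = Subgroup.closure {C} ∨ H = Subgroup.closure {C, -1})) ∨
      ∃ A B, A ≠ -1 ∧ B ≠ -1 ∧ (A ^ 2 = 1 ∨ A ^ 2 = -1) ∧ (B ^ 2 = 1 ∨ B ^ 2 = -1) ∧
        (H = Subgroup.closure {A, B} ∨ H = Subgroup.closure {A, B, -1}) := by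
  obtain ⟨T, hT, ⟨C, hC, rfl⟩ | ⟨A, B, hA, hB, hA2, hB2, rfl⟩⟩ := exists_eq_closure_union hZ
  · exact .inl ⟨C, hC, closure_union_eq_or_of_subset_pair hT⟩
  · refine .inr ⟨A, B, hA, hB, hT hA2, hT hB2, ?_⟩
    simpa only [Set.insert_union, Set.singleton_union] using
      closure_union_eq_or_of_subset_pair (S := {A, B}) hT

end GeneralLinear

end TwoEnded

/-- Classification of the two-ended subgroups of `GL(2,ℤ)`. -/
theorem two_ended_subgroup_GL2Z_classification
    (H : Subgroup (GL (Fin 2) ℤ)) (hinf : Infinite H)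
    (hends : ∃ Z : Subgroup (GL (Fin 2) ℤ), Z ≤ H ∧ IsCyclic Z ∧ Infinite Z ∧
      (Z.subgroupOf H).FiniteIndex) :
    -- (1) H is infinite cyclic
    (IsCyclic H) ∨
    -- (2) H is generated by an element of infinite order together with -I,
    --     and is isomorphic to ℤ × ℤ/2ℤ
    (∃ A : GL (Fin 2) ℤ, ¬ IsOfFinOrder A ∧ H = Subgroup.closure {A, -1} ∧
      Nonempty (H ≃* Multiplicative ℤ × Multiplicative (ZMod 2))) ∨
    -- (3) H = ⟨A, B⟩ with A² = B² = I
    (∃ A B : GL (Fin 2) ℤ, A ≠ -1 ∧ B ≠ -1 ∧ A ^ 2 = 1 ∧ B ^ 2 = 1 ∧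
      H = Subgroup.closure {A, B}) ∨
    -- (4) H = ⟨A, B, -I⟩ with A² = B² = I
    (∃ A B : GL (Fin 2) ℤ, A ≠ -1 ∧ B ≠ -1 ∧ A ^ 2 = 1 ∧ B ^ 2 = 1 ∧
      H = Subgroup.closure {A, B, -1}) ∨
    -- (5) H = ⟨A, B⟩ with A of order 4 and B² = I
    (∃ A B : GL (Fin 2) ℤ, A ≠ -1 ∧ B ≠ -1 ∧ orderOf A = 4 ∧ B ^ 2 = 1 ∧
      H = Subgroup.closure {A, B}) ∨
    -- (6) H = ⟨A, B⟩ with A and B each of order 4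
    (∃ A B : GL (Fin 2) ℤ, A ≠ -1 ∧ B ≠ -1 ∧ orderOf A = 4 ∧ orderOf B = 4 ∧
      H = Subgroup.closure {A, B}) := by
  obtain ⟨Z, hZ, hcyc, -, hindex⟩ := hends
  rcases TwoEnded.eq_closure_cyclic_or_dihedral hZ with
    ⟨C, hC, rfl | rfl⟩ | ⟨A, B, hA, hB, hA2 | hA2, hB2 | hB2, hH⟩
  · exact .inl ((Subgroup.isCyclic_iff_exists_zpowers_eq_top _).2 ⟨C, zpowers_eq_closure C⟩)
  · exact .inr (.inl ⟨C, hC, rfl, TwoEnded.nonempty_closure_pair_mulEquiv hC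
      TwoEnded.orderOf_neg_one_eq_two (.neg_one_right C)⟩)
  · rcases hH with hH | hH
    · exact .inr (.inr (.inl ⟨A, B, hA, hB, hA2, hB2, hH⟩))
    · exact .inr (.inr (.inr (.inl ⟨A, B, hA, hB, hA2, hB2, hH⟩)))
  · have hH' := TwoEnded.eq_closure_pair_of_sq_eq (.inr hB2) hH
    exact .inr (.inr (.inr (.inr (.inl ⟨B, A, hB, hA,
      TwoEnded.orderOf_eq_four_of_sq_eq_neg_one hB2, hA2, Set.pair_comm A B ▸ hH'⟩))))
  · have hH' := TwoEnded.eq_closure_pair_of_sq_eq (.inl hA2) hH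
    exact .inr (.inr (.inr (.inr (.inl ⟨A, B, hA, hB,
      TwoEnded.orderOf_eq_four_of_sq_eq_neg_one hA2, hB2, hH'⟩))))
  · have hH' := TwoEnded.eq_closure_pair_of_sq_eq (.inl hA2) hH
    exact .inr (.inr (.inr (.inr (.inr ⟨A, B, hA, hB,
      TwoEnded.orderOf_eq_four_of_sq_eq_neg_one hA2,
      TwoEnded.orderOf_eq_four_of_sq_eq_neg_one hB2, hH'⟩))))
end

section
/- Let a, b, c be integers with a > 1 and a² - bc = 1, let Ψ = [[a,b],[c,a]], and let ξ = (ξ₁, ξ₂) ∈ ℤ² be a vector not in the image of the map ℤ² → ℤ² given by I - Ψ. Let Θ be the bordered 3×3 integer matrix [[1,0,0],[ξ₁,a,b],[ξ₂,c,a]] (which lies in SL(3,ℤ)). Then Θ is not conjugate in GL(3,ℤ) to any block diagonal matrix, i.e., there is no P ∈ GL(3,ℤ) such that PΘP⁻¹ has the form [[ε,0,0],[0,m₁₁,m₁₂],[0,m₂₁,m₂₂]]. -/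
open Matrix

/-!
A matrix conjugate to one that splits off its first coordinate has a left eigenvector `φ` and a
right eigenvector `u` for a common eigenvalue, with `φ ⬝ᵥ u = 1`. If `A = [[α, 0], [ξ, Ψ]]` and `Ψ`
has no eigenvalue in the base ring, then the tail of `φ` vanishes, so the head of `u` is a unit and
the eigenvalue is `α`. The tail of the equation `A u = α u` then exhibits `ξ` as an element of the
image of `α - Ψ`. An integral eigenvalue of a matrix in `SL(2, ℤ)` divides `1`, which forces the
trace to be `±2`.
-/

section Split

variable {ι R : Type*}

/-- The matrix `D` is block diagonal with respect to the splitting of the index set into `i₀` and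
the remaining indices. -/
def IsSplitAt [Zero R] (i₀ : ι) (D : Matrix ι ι R) : Prop :=
  ∀ j, j ≠ i₀ → D i₀ j = 0 ∧ D j i₀ = 0

variable [Fintype ι] [DecidableEq ι] {i₀ : ι}

theorem IsSplitAt.single_vecMul [Semiring R] {D : Matrix ι ι R} (hD : IsSplitAt i₀ D) :
    Pi.single i₀ 1 ᵥ* D = D i₀ i₀ • Pi.single i₀ 1 := by
  ext j
  obtain rfl | hj := eq_or_ne j i₀
  · simp
  · simp [hj, (hD j hj).1]

theorem IsSplitAt.mulVec_single [Semiring R] {D : Matrix ι ι R} (hD : IsSplitAt i₀ D) :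
    D *ᵥ Pi.single i₀ 1 = D i₀ i₀ • Pi.single i₀ 1 := by
  ext j
  obtain rfl | hj := eq_or_ne j i₀
  · simp
  · simp [hj, (hD j hj).2]

theorem exists_eigenvectors_of_isSplitAt_conj [CommSemiring R] {A : Matrix ι ι R}
    {P : (Matrix ι ι R)ˣ} (hsplit : IsSplitAt i₀ (P.val * A * P⁻¹.val)) :
    ∃ (μ : R) (φ u : ι → R), φ ᵥ* A = μ • φ ∧ A *ᵥ u = μ • u ∧ φ ⬝ᵥ u = 1 := by
  set D := P.val * A * P⁻¹.val with hD
  have hPA : P.val * A = D * P.val := by simp [hD, mul_assoc]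
  have hAP : A * P⁻¹.val = P⁻¹.val * D := by simp [hD, ← mul_assoc]
  refine ⟨D i₀ i₀, Pi.single i₀ 1 ᵥ* P.val, P⁻¹.val *ᵥ Pi.single i₀ 1, ?_, ?_, ?_⟩
  · rw [vecMul_vecMul, hPA, ← vecMul_vecMul, hsplit.single_vecMul, smul_vecMul]
  · rw [mulVec_mulVec, hAP, ← mulVec_mulVec, hsplit.mulVec_single, mulVec_smul]
  · rw [dotProduct_mulVec, vecMul_vecMul, P.mul_inv, vecMul_one, single_one_dotProduct,
      Pi.single_eq_same]

theorem isSplitAt_zero_fin_three [Zero R] (ε m₁₁ m₁₂ m₂₁ m₂₂ : R) :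
    IsSplitAt 0 !![ε, 0, 0; 0, m₁₁, m₁₂; 0, m₂₁, m₂₂] := by
  intro j hj
  fin_cases j <;> simp at hj ⊢

end Split

section Bordered

variable {R : Type*} {n : ℕ}

/-- The bordered matrix `[[α, 0], [ξ, Ψ]]`. -/
def borderedMatrix [Zero R] (α : R) (ξ : Fin n → R) (Ψ : Matrix (Fin n) (Fin n) R) :
    Matrix (Fin (n + 1)) (Fin (n + 1)) R :=
  of (vecCons (vecCons α 0) fun i ↦ vecCons (ξ i) (Ψ i))

theorem borderedMatrix_fin_two [Zero R] (α ξ₁ ξ₂ a b c d : R) :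
    borderedMatrix α ![ξ₁, ξ₂] !![a, b; c, d] = !![α, 0, 0; ξ₁, a, b; ξ₂, c, d] := by
  ext i j
  fin_cases i <;> fin_cases j <;> rfl

theorem vecCons_vecMul_borderedMatrix [NonUnitalNonAssocSemiring R] (α p : R) (ξ r : Fin n → R)
    (Ψ : Matrix (Fin n) (Fin n) R) :
    vecCons p r ᵥ* borderedMatrix α ξ Ψ = vecCons (p * α + r ⬝ᵥ ξ) (r ᵥ* Ψ) := by
  ext j
  cases j using Fin.cases <;>
    simp [borderedMatrix, vecMul, dotProduct, Fin.sum_univ_succ]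

theorem borderedMatrix_mulVec_vecCons [NonUnitalCommSemiring R] (α q : R) (ξ s : Fin n → R)
    (Ψ : Matrix (Fin n) (Fin n) R) :
    borderedMatrix α ξ Ψ *ᵥ vecCons q s = vecCons (α * q) (q • ξ + Ψ *ᵥ s) := by
  ext i
  cases i using Fin.cases <;>
    simp [borderedMatrix, mulVec, dotProduct, Fin.sum_univ_succ, mul_comm q]

variable [CommRing R]

theorem det_borderedMatrix (α : R) (ξ : Fin n → R) (Ψ : Matrix (Fin n) (Fin n) R) :
    (borderedMatrix α ξ Ψ).det = α * Ψ.det := by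
  have hcorner : borderedMatrix α ξ Ψ 0 0 = α := rfl
  have hrow (j : Fin n) : borderedMatrix α ξ Ψ 0 j.succ = 0 := rfl
  have hminor : (borderedMatrix α ξ Ψ).submatrix Fin.succ Fin.succ = Ψ := rfl
  simp [det_succ_row_zero, Fin.sum_univ_succ, hcorner, hrow, hminor]

theorem exists_mulVec_eq_of_borderedMatrix_eigenvectors {α μ : R} {ξ : Fin n → R}
    {Ψ : Matrix (Fin n) (Fin n) R} {φ u : Fin (n + 1) → R}
    (hΨ : ∀ r : Fin n → R, r ᵥ* Ψ = μ • r → r = 0)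
    (hφ : φ ᵥ* borderedMatrix α ξ Ψ = μ • φ) (hu : borderedMatrix α ξ Ψ *ᵥ u = μ • u)
    (hφu : φ ⬝ᵥ u = 1) :
    ∃ v, (α • (1 : Matrix (Fin n) (Fin n) R) - Ψ) *ᵥ v = ξ := by
  obtain ⟨p, r, rfl⟩ : ∃ p r, φ = vecCons p r := ⟨_, _, (cons_head_tail φ).symm⟩
  obtain ⟨q, s, rfl⟩ : ∃ q s, u = vecCons q s := ⟨_, _, (cons_head_tail u).symm⟩
  rw [vecCons_vecMul_borderedMatrix, smul_cons, vecCons_inj] at hφ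
  rw [borderedMatrix_mulVec_vecCons, smul_cons, vecCons_inj, smul_eq_mul] at hu
  obtain ⟨hq, hs⟩ := hu
  have hr : r = 0 := hΨ r hφ.2
  have hpq : p * q = 1 := by simpa [hr] using hφu
  have hα : α = μ := by linear_combination p * hq - (α - μ) * hpq
  refine ⟨p • s, ?_⟩
  calc (α • 1 - Ψ) *ᵥ (p • s) = p • (α • s - Ψ *ᵥ s) := by
        rw [mulVec_smul, sub_mulVec, smul_mulVec, one_mulVec]
    _ = p • q • ξ := by rw [hα, ← hs, add_sub_cancel_right]
    _ = ξ := by rw [smul_smul, hpq, one_smul]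

theorem bordered_matrix_not_conjugate_to_block_diagonal_general {α : R} {ξ : Fin n → R}
    {Ψ : Matrix (Fin n) (Fin n) R} (hΨ : ∀ (μ : R) (r : Fin n → R), r ᵥ* Ψ = μ • r → r = 0)
    (hξ : ¬ ∃ v, (α • (1 : Matrix (Fin n) (Fin n) R) - Ψ) *ᵥ v = ξ) (P : GL (Fin (n + 1)) R) :
    ¬ IsSplitAt 0 (P.val * borderedMatrix α ξ Ψ * P⁻¹.val) := by
  intro hP
  obtain ⟨μ, φ, u, hφ, hu, hφu⟩ := exists_eigenvectors_of_isSplitAt_conj hP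
  exact hξ (exists_mulVec_eq_of_borderedMatrix_eigenvectors (hΨ μ) hφ hu hφu)

end Bordered

theorem eq_zero_of_vecMul_eq_smul_of_not_isRoot_charpoly {n R : Type*} [Fintype n] [DecidableEq n]
    [CommRing R] [IsDomain R] {Ψ : Matrix n n R} {μ : R} (hμ : ¬ Ψ.charpoly.IsRoot μ) {r : n → R}
    (hr : r ᵥ* Ψ = μ • r) : r = 0 := by
  rw [Polynomial.IsRoot.def, eval_charpoly] at hμ
  refine eq_zero_of_vecMul_eq_zero hμ ?_
  rw [vecMul_sub, hr, scalar_apply, ← smul_one_eq_diagonal, vecMul_smul, vecMul_one, sub_self]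

theorem not_isRoot_charpoly_of_det_eq_one_of_abs_trace_ne_two {Ψ : Matrix (Fin 2) (Fin 2) ℤ}
    (hdet : Ψ.det = 1) (htr : |Ψ.trace| ≠ 2) (μ : ℤ) : ¬ Ψ.charpoly.IsRoot μ := by
  intro hμ
  have hroot : μ ^ 2 - Ψ.trace * μ + 1 = 0 := by
    simpa [charpoly_fin_two, hdet] using hμ
  have hmul : μ * (Ψ.trace - μ) = 1 := by linear_combination -hroot
  rcases Int.mul_eq_one_iff_eq_one_or_neg_one.mp hmul with ⟨h₁, h₂⟩ | ⟨h₁, h₂⟩ <;> grind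

/-- If `ξ ∉ Im(I - Ψ)`, then the bordered matrix `Θ = [[1,0],[ξ,Ψ]] ∈ SL(3,ℤ)`
is not conjugate in `GL(3,ℤ)` to a block diagonal matrix. -/
theorem bordered_matrix_not_conjugate_to_block_diagonal
    (a b c : ℤ) (ha : 1 < a) (h : a ^ 2 - b * c = 1) (ξ₁ ξ₂ : ℤ)
    (hξ : ¬ ∃ v : Fin 2 → ℤ,
      ((1 : Matrix (Fin 2) (Fin 2) ℤ) - !![a, b; c, a]).mulVec v = ![ξ₁, ξ₂]) :
    (!![1, 0, 0; ξ₁, a, b; ξ₂, c, a] : Matrix (Fin 3) (Fin 3) ℤ).det = 1 ∧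
    ¬ ∃ (P : GL (Fin 3) ℤ) (ε m₁₁ m₁₂ m₂₁ m₂₂ : ℤ),
      (P : Matrix (Fin 3) (Fin 3) ℤ) * !![1, 0, 0; ξ₁, a, b; ξ₂, c, a] *
        ((P⁻¹ : GL (Fin 3) ℤ) : Matrix (Fin 3) (Fin 3) ℤ)
        = !![ε, 0, 0; 0, m₁₁, m₁₂; 0, m₂₁, m₂₂] := by
  have hdet : !![a, b; c, a].det = 1 := by rw [det_fin_two_of, ← sq, h]
  have htr : |!![a, b; c, a].trace| ≠ 2 := by rw [trace_fin_two_of]; grind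
  rw [← borderedMatrix_fin_two]
  refine ⟨by rw [det_borderedMatrix, hdet, one_mul], ?_⟩
  rintro ⟨P, ε, m₁₁, m₁₂, m₂₁, m₂₂, hP⟩
  have hΨ (μ : ℤ) (r : Fin 2 → ℤ) : r ᵥ* !![a, b; c, a] = μ • r → r = 0 :=
    eq_zero_of_vecMul_eq_smul_of_not_isRoot_charpoly
      (not_isRoot_charpoly_of_det_eq_one_of_abs_trace_ne_two hdet htr μ)
  rw [← one_smul ℤ (1 : Matrix (Fin 2) (Fin 2) ℤ)] at hξ
  exact bordered_matrix_not_conjugate_to_block_diagonal_general hΨ hξ P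
    (hP ▸ isSplitAt_zero_fin_three ε m₁₁ m₁₂ m₂₁ m₂₂)
end

section
/- Let G₂ = ℤ² ⋊_φ ℤ, where φ : ℤ → Aut(ℤ²) sends n to multiplication by (-1)ⁿ. Then the subgroup ℤ² × {0} = {(v,0) : v ∈ ℤ²} is characteristic in G₂: every automorphism of G₂ maps it onto itself. -/
open SemidirectProduct

/-- The action `φ : ℤ → Aut(ℤ²)` sending `n` to multiplication by `(-1)ⁿ`
(the generator acts by negation), written multiplicatively. -/
def phi : Multiplicative ℤ →* MulAut (Multiplicative (ℤ × ℤ)) :=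
  zpowersHom (MulAut (Multiplicative (ℤ × ℤ))) (MulEquiv.inv (Multiplicative (ℤ × ℤ)))

/-- `G₂ = ℤ² ⋊_φ ℤ`, the fundamental group of the half-turn flat 3-manifold. -/
abbrev G₂ : Type := Multiplicative (ℤ × ℤ) ⋊[phi] Multiplicative ℤ

/-! An element conjugate to its inverse is killed by every homomorphism to a torsion-free abelian
group. If every element of `N` is inverted by some element of `G`, and `G` is torsion-free abelian,
then `rightHom ∘ f` therefore kills `N` for every automorphism `f` of `N ⋊ G`. -/

theorem map_eq_one_of_isConj_inv {H A : Type*} [Group H] [CommGroup A] [IsMulTorsionFree A]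
    (f : H →* A) {x : H} (hx : IsConj x x⁻¹) : f x = 1 := by
  have hfx : f x = (f x)⁻¹ := by
    simpa only [map_inv, isConj_iff_eq] using f.map_isConj hx
  exact self_eq_inv.mp hfx

theorem characteristic_ker_of_forall_ker_le {H A : Type*} [Group H] [Group A] {p : H →* A}
    (hp : ∀ q : H →* A, p.ker ≤ q.ker) : p.ker.Characteristic :=
  Subgroup.characteristic_iff_le_comap.mpr fun f => hp (p.comp f.toMonoidHom)

section

variable {N G : Type*} [Group N] [Group G] {φ : G →* MulAut N}

theorem isConj_inl_inl_aut (g : G) (n : N) :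
    IsConj (inl n : N ⋊[φ] G) (inl (φ g n)) :=
  isConj_iff.mpr ⟨inr g, by rw [inl_aut, map_inv]⟩

theorem ker_rightHom_le_ker_of_exists_aut_eq_inv {A : Type*} [CommGroup A] [IsMulTorsionFree A]
    (hφ : ∀ n, ∃ g, φ g n = n⁻¹) (q : N ⋊[φ] G →* A) :
    (rightHom : N ⋊[φ] G →* G).ker ≤ q.ker := by
  rw [← range_inl_eq_ker_rightHom]
  rintro _ ⟨n, rfl⟩
  obtain ⟨g, hg⟩ := hφ n
  have hconj : IsConj (inl n : N ⋊[φ] G) (inl n)⁻¹ := by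
    simpa only [hg, map_inv] using isConj_inl_inl_aut (φ := φ) g n
  exact map_eq_one_of_isConj_inv q hconj

end

theorem Z2_char_in_G2_general {N G : Type*} [Group N] [CommGroup G] [IsMulTorsionFree G]
    {φ : G →* MulAut N} (hφ : ∀ n, ∃ g, φ g n = n⁻¹) :
    (rightHom : N ⋊[φ] G →* G).ker.Characteristic :=
  characteristic_ker_of_forall_ker_le (ker_rightHom_le_ker_of_exists_aut_eq_inv hφ)

theorem phi_ofAdd_one_apply (v : Multiplicative (ℤ × ℤ)) :
    phi (Multiplicative.ofAdd 1) v = v⁻¹ := by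
  simp [phi]

/-- The subgroup `ℤ² × {0} = {(v,0) : v ∈ ℤ²}` of `G₂` is characteristic:
every automorphism of `G₂` maps it onto itself. -/
theorem Z2_char_in_G2 (f : G₂ ≃* G₂) :
    Subgroup.map f.toMonoidHom (rightHom : G₂ →* Multiplicative ℤ).ker
      = (rightHom : G₂ →* Multiplicative ℤ).ker :=
  Subgroup.characteristic_iff_map_eq.mp
    (Z2_char_in_G2_general fun v => ⟨_, phi_ofAdd_one_apply v⟩) f
end
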